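/- arXiv:1201.4901 — 2 statements merged into one kernel-verified Lean document; each statement's English description precedes it below -/
import Mathlib

section
/- The Demazure product on a Coxeter group is associative: for all $x, y, z \in W$, $(x*y)*z = x*(y*z)$. -/
/-- The Bruhat order on a Coxeter group, via the subword property. -/
def CoxeterSystem.BruhatLE {B W : Type*} [Group W] {M : CoxeterMatrix B}
    (cs : CoxeterSystem M W) (u w : W) : Prop :=
  ∃ ω : List B, cs.IsReduced ω ∧ cs.wordProd ω = w ∧
    ∃ ω' : List B, ω'.Sublist ω ∧ cs.wordProd ω' = u

/-- `m` is the Demazure product of `x` and `y`: the unique Bruhat-maximal element of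
`{u u' : u ≤ x, u' ≤ y}`. -/
def CoxeterSystem.IsDemazureProd {B W : Type*} [Group W] {M : CoxeterMatrix B}
    (cs : CoxeterSystem M W) (x y m : W) : Prop :=
  (∃ u u' : W, cs.BruhatLE u x ∧ cs.BruhatLE u' y ∧ m = u * u') ∧
    ∀ z : W, (∃ u u' : W, cs.BruhatLE u x ∧ cs.BruhatLE u' y ∧ z = u * u') →
      cs.BruhatLE z m

namespace CoxeterSystem

section aux
variable {B W : Type*} [Group W] {M : CoxeterMatrix B} (cs : CoxeterSystem M W)

open Classical in
/-- The signed permutation attached to a simple reflection. -/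
noncomputable def dzF (i : B) : Equiv.Perm (W × ZMod 2) where
  toFun p := (cs.simple i * p.1 * cs.simple i, p.2 + if p.1 = cs.simple i then 1 else 0)
  invFun p := (cs.simple i * p.1 * cs.simple i, p.2 + if p.1 = cs.simple i then 1 else 0)
  left_inv p := by
    obtain ⟨t, e⟩ := p
    have h : (cs.simple i * t * cs.simple i = cs.simple i) ↔ t = cs.simple i := by
      constructor
      · intro h
        have h2 := mul_eq_right.mp h
        rw [mul_eq_one_iff_eq_inv'] at h2
        simpa using h2
      · rintro rfl; simp
    ext
    · simp [mul_assoc]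
    · simp only [h]
      rw [add_assoc, CharTwo.add_self_eq_zero, add_zero]
  right_inv p := by
    obtain ⟨t, e⟩ := p
    have h : (cs.simple i * t * cs.simple i = cs.simple i) ↔ t = cs.simple i := by
      constructor
      · intro h
        have h2 := mul_eq_right.mp h
        rw [mul_eq_one_iff_eq_inv'] at h2
        simpa using h2
      · rintro rfl; simp
    ext
    · simp [mul_assoc]
    · simp only [h]
      rw [add_assoc, CharTwo.add_self_eq_zero, add_zero]

open Classical in
theorem dzF_apply (i : B) (t : W) (e : ZMod 2) : cs.dzF i (t, e) =
    (cs.simple i * t * cs.simple i, e + if t = cs.simple i then 1 else 0) := rfl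

open Classical in
theorem dzF_pow (i j : B) (m : ℕ) (t : W) (e : ZMod 2) :
    ((cs.dzF i * cs.dzF j) ^ m) (t, e) =
      ((cs.simple i * cs.simple j) ^ m * t * ((cs.simple i * cs.simple j) ^ m)⁻¹,
        e + ∑ n ∈ Finset.range (2 * m),
          if t = cs.simple j * (cs.simple i * cs.simple j) ^ n then 1 else 0) := by
  induction m with
  | zero => simp
  | succ m ih =>
    rw [pow_succ', Equiv.Perm.mul_apply, ih, Equiv.Perm.mul_apply, dzF_apply, dzF_apply]
    set c := cs.simple i * cs.simple j with hc
    have hji : cs.simple j * cs.simple i = c⁻¹ := by simp [hc]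
    have hcj : cs.simple j * c * cs.simple j = c⁻¹ := by simp [hc, mul_assoc]
    have hk : ∀ k : ℕ, cs.simple j * c ^ k = (c ^ k)⁻¹ * cs.simple j := by
      intro k
      have : (cs.simple j * c * (cs.simple j)⁻¹) ^ k = (c⁻¹) ^ k := by
        rw [inv_simple, hcj]
      rw [conj_pow, inv_pow] at this
      rw [← this]; simp
    have h1 : (c ^ m * t * (c ^ m)⁻¹ = cs.simple j) ↔ t = cs.simple j * c ^ (2 * m) := by
      rw [mul_inv_eq_iff_eq_mul, ← eq_inv_mul_iff_mul_eq, ← mul_assoc, ← hk, two_mul, pow_add,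
        mul_assoc]
    have h2 : (cs.simple j * (c ^ m * t * (c ^ m)⁻¹) * cs.simple j = cs.simple i) ↔
        t = cs.simple j * c ^ (2 * m + 1) := by
      have e1 : cs.simple j * (c ^ m * t * (c ^ m)⁻¹) * cs.simple j = cs.simple i ↔
          c ^ m * t * (c ^ m)⁻¹ = cs.simple j * cs.simple i * cs.simple j := by
        constructor
        · intro h; rw [← h]; simp [mul_assoc]
        · intro h; rw [h]; simp [mul_assoc]
      rw [e1, mul_assoc (cs.simple j), ← hc, mul_inv_eq_iff_eq_mul, ← eq_inv_mul_iff_mul_eq,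
        mul_assoc, ← mul_assoc, ← hk, mul_assoc, ← pow_succ', ← pow_add]
      congr! 3
      omega
    rw [show 2 * (m + 1) = 2 * m + 1 + 1 by ring, Finset.sum_range_succ, Finset.sum_range_succ]
    simp only [h1, h2]
    ext
    · simp only [pow_succ', mul_inv_rev]
      simp [hc, mul_assoc]
    · simp only [add_assoc]

theorem dzF_liftable : M.IsLiftable cs.dzF := by
  classical
  intro i j
  ext1 ⟨t, e⟩
  rw [dzF_pow, two_mul, Finset.sum_range_add]
  have : (cs.simple i * cs.simple j) ^ M i j = 1 := cs.simple_mul_simple_pow i j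
  simp only [pow_add, this, one_mul]
  rw [CharTwo.add_self_eq_zero]
  simp

/-- The reflection representation on signed group elements. -/
noncomputable def dzPhi : W →* Equiv.Perm (W × ZMod 2) := cs.lift ⟨cs.dzF, cs.dzF_liftable⟩

theorem dzPhi_simple (i : B) : cs.dzPhi (cs.simple i) = cs.dzF i := by
  simp [dzPhi]

theorem dzPhi_word (ω : List B) (t : W) (e : ZMod 2) : ∃ a : ZMod 2,
    cs.dzPhi (cs.wordProd ω) (t, e) = (cs.wordProd ω * t * (cs.wordProd ω)⁻¹, e + a) ∧
      (a ≠ 0 → t ∈ cs.rightInvSeq ω) := by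
  classical
  induction ω with
  | nil => exact ⟨0, by simp⟩
  | cons i ω ih =>
    obtain ⟨a, h, ha⟩ := ih
    rw [wordProd_cons, map_mul, Equiv.Perm.mul_apply, h, dzPhi_simple, dzF_apply]
    refine ⟨a + _, by rw [add_assoc]; congr 1; simp [mul_assoc], ?_⟩
    intro hne
    simp only [rightInvSeq, List.mem_cons]
    by_cases h0 : a = 0
    · left
      split_ifs at hne with hh
      · rw [← hh]; group
      · simp [h0] at hne
    · exact Or.inr (ha h0)

theorem dzPhi_apply (w t : W) : ∃ a : ZMod 2, ∀ e,
    cs.dzPhi w (t, e) = (w * t * w⁻¹, e + a) := by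
  classical
  obtain ⟨ω, -, rfl⟩ := cs.exists_isReduced w
  induction ω with
  | nil => exact ⟨0, by simp⟩
  | cons i ω ih =>
    obtain ⟨a, h⟩ := ih
    refine ⟨a + if cs.wordProd ω * t * (cs.wordProd ω)⁻¹ = cs.simple i then 1 else 0,
      fun e => ?_⟩
    rw [wordProd_cons, map_mul, Equiv.Perm.mul_apply, h, dzPhi_simple, dzF_apply]
    rw [add_assoc]; congr 1; simp [mul_assoc]

theorem dzPhi_refl {t : W} (ht : cs.IsReflection t) (e : ZMod 2) :
    cs.dzPhi t (t, e) = (t, e + 1) := by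
  classical
  obtain ⟨u, i, rfl⟩ := ht
  obtain ⟨a, ha⟩ := cs.dzPhi_apply u⁻¹ (u * cs.simple i * u⁻¹)
  obtain ⟨b, hb⟩ := cs.dzPhi_apply u (cs.simple i)
  have hs : u⁻¹ * (u * cs.simple i * u⁻¹) * u⁻¹⁻¹ = cs.simple i := by group
  rw [hs] at ha
  have key : cs.dzPhi u (cs.dzPhi u⁻¹ (u * cs.simple i * u⁻¹, 0)) =
      (u * cs.simple i * u⁻¹, 0) := by
    rw [← Equiv.Perm.mul_apply, ← map_mul]; simp
  rw [ha, hb, Prod.mk.injEq] at key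
  have hab : a + b = 0 := by simpa using key.2
  rw [map_mul, map_mul, Equiv.Perm.mul_apply, Equiv.Perm.mul_apply, ha, dzPhi_simple, dzF_apply]
  simp only [simple_mul_simple_self, one_mul, if_true]
  rw [hb]
  congr 1
  linear_combination hab

/-- Strong exchange. -/
theorem dz_exchange {t : W} (ht : cs.IsReflection t) (ω : List B)
    (hl : cs.length (cs.wordProd ω * t) < cs.length (cs.wordProd ω)) :
    ∃ j, j < ω.length ∧ cs.wordProd ω * t = cs.wordProd (ω.eraseIdx j) := by
  obtain ⟨a, h, ha⟩ := cs.dzPhi_word ω t 0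
  have ha0 : a ≠ 0 := by
    rintro rfl
    obtain ⟨ρ, hρ, hρw⟩ := cs.exists_isReduced (cs.wordProd ω * t)
    obtain ⟨b, hb, hb'⟩ := cs.dzPhi_word ρ t 0
    have h2 : cs.dzPhi (cs.wordProd ω * t) (t, 1) = cs.dzPhi (cs.wordProd ω) (t, 0) := by
      rw [map_mul, Equiv.Perm.mul_apply, cs.dzPhi_refl ht]
      rfl
    obtain ⟨b', hb2⟩ := cs.dzPhi_apply (cs.wordProd ρ) t
    rw [hρw, hb2, h] at h2
    rw [hb2] at hb
    have e1 := congrArg Prod.snd h2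
    have e2 := congrArg Prod.snd hb
    simp only [zero_add, add_zero] at e1 e2
    have hbne : b ≠ 0 := by
      rintro rfl
      rw [e2] at e1; exact absurd e1 (by decide)
    have := (cs.isRightInversion_of_mem_rightInvSeq hρ (hb' hbne)).2
    rw [← hρw, mul_assoc, ht.mul_self, mul_one] at this
    omega
  have hm := ha ha0
  obtain ⟨j, hj, hjt⟩ := List.getElem_of_mem hm
  refine ⟨j, by simpa using hj, ?_⟩
  rw [← wordProd_mul_getD_rightInvSeq, List.getD_eq_getElem _ _ hj, hjt]

theorem dz_reduced_sublist (ω : List B) : ∃ ρ : List B, ρ.Sublist ω ∧ cs.IsReduced ρ ∧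
    cs.wordProd ρ = cs.wordProd ω := by
  induction ω using List.reverseRecOn with
  | nil => exact ⟨[], List.Sublist.refl _, by simp [IsReduced], rfl⟩
  | append_singleton ω i ih =>
    obtain ⟨ρ, hs, hr, hp⟩ := ih
    have hr' := hr.eq
    rcases cs.length_mul_simple (cs.wordProd ρ) i with h | h
    · refine ⟨ρ ++ [i], hs.append (List.Sublist.refl _), ?_, ?_⟩
      · simp [IsReduced, wordProd_append, h, hr']
      · simp [wordProd_append, hp]
    · obtain ⟨j, hj, hje⟩ := cs.dz_exchange (cs.isReflection_simple i) ρ (by omega)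
      refine ⟨ρ.eraseIdx j, ((List.eraseIdx_sublist _ _).trans hs).trans
        (List.sublist_append_left _ _), ?_, ?_⟩
      · rw [IsReduced, ← hje, List.length_eraseIdx_of_lt hj]; omega
      · rw [← hje, hp]; simp [wordProd_append]

/-- Elementary Bruhat step. -/
def dzStep (x y : W) : Prop := ∃ t, cs.IsReflection t ∧ x = y * t ∧ cs.length x < cs.length y

/-- Chain version of the Bruhat order. -/
def dzC (x y : W) : Prop := Relation.ReflTransGen cs.dzStep x y

theorem dzC_sublist {x y : W} (h : cs.dzC x y) (ω : List B) (hω : cs.wordProd ω = y) :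
    ∃ ω' : List B, ω'.Sublist ω ∧ cs.wordProd ω' = x := by
  induction h generalizing ω with
  | refl => exact ⟨ω, List.Sublist.refl _, hω⟩
  | tail _ hs ih =>
    obtain ⟨t, ht, hx, hl⟩ := hs
    subst hω
    subst hx
    obtain ⟨j, -, hje⟩ := cs.dz_exchange ht ω hl
    obtain ⟨ω', h1, h2⟩ := ih _ hje.symm
    exact ⟨ω', h1.trans (List.eraseIdx_sublist _ _), h2⟩

theorem dzC_simple {x : W} {i : B} (h : cs.length x < cs.length (x * cs.simple i)) :
    cs.dzC x (x * cs.simple i) :=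
  Relation.ReflTransGen.single ⟨cs.simple i, cs.isReflection_simple i, by simp [mul_assoc], h⟩

theorem dzStep_lift {x y : W} (h : cs.dzStep x y) (i : B) :
    cs.dzC (x * cs.simple i) y ∨ cs.dzC (x * cs.simple i) (y * cs.simple i) := by
  have h0 := h
  obtain ⟨t, ht, hx, hl⟩ := h
  rcases cs.length_mul_simple x i with h1 | h1
  swap
  · left
    have := cs.dzC_simple (x := x * cs.simple i) (i := i) (by simp [mul_assoc]; omega)
    simp only [mul_assoc, simple_mul_simple_self, mul_one] at this
    exact this.trans (Relation.ReflTransGen.single h0)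
  · have hr : cs.IsReflection (cs.simple i * t * cs.simple i) := by
      simpa using ht.conj (cs.simple i)
    have hxy : x * cs.simple i = y * cs.simple i * (cs.simple i * t * cs.simple i) := by
      rw [hx]; simp [mul_assoc]
    have hyx : y * cs.simple i = x * cs.simple i * (cs.simple i * t * cs.simple i) := by
      rw [hxy, mul_assoc _ _ (cs.simple i * t * cs.simple i), hr.mul_self, mul_one]
    have hne := hr.length_mul_left_ne (y * cs.simple i)
    rw [← hxy] at hne
    rcases lt_or_gt_of_ne hne with h2 | h2
    · right
      exact Relation.ReflTransGen.single ⟨_, hr, hxy, h2⟩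
    · left
      obtain ⟨ρ, hρ, rfl⟩ := cs.exists_isReduced x
      have hw : cs.wordProd (ρ ++ [i]) = cs.wordProd ρ * cs.simple i := by
        simp [wordProd_append]
      obtain ⟨j, hj, hje⟩ := cs.dz_exchange hr (ρ ++ [i]) (by rw [hw, ← hyx]; exact h2)
      rw [hw, ← hyx] at hje
      rcases lt_or_ge j ρ.length with hjl | hjl
      · rw [List.eraseIdx_append_of_lt_length hjl, wordProd_append, wordProd_singleton,
          mul_left_inj] at hje
        have := cs.length_wordProd_le (ρ.eraseIdx j)
        rw [← hje, List.length_eraseIdx_of_lt hjl] at this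
        have := hρ.eq
        omega
      · have : j = ρ.length := by simp at hj; omega
        subst this
        rw [List.eraseIdx_append_of_length_le le_rfl] at hje
        simp at hje
        rw [← hje]
        simp only [mul_assoc, simple_mul_simple_self, mul_one]
        exact Relation.ReflTransGen.refl

theorem dzC_lift {x y : W} (h : cs.dzC x y) (i : B) :
    cs.dzC (x * cs.simple i) y ∨ cs.dzC (x * cs.simple i) (y * cs.simple i) := by
  induction h with
  | refl => exact Or.inr Relation.ReflTransGen.refl
  | tail _ hs ih =>
    rcases ih with ih | ih
    · exact Or.inl (ih.trans (Relation.ReflTransGen.single hs))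
    · rcases cs.dzStep_lift hs i with h | h
      · exact Or.inl (ih.trans h)
      · exact Or.inr (ih.trans h)

theorem dzC_of_sublist (ω : List B) (hω : cs.IsReduced ω) (ω' : List B) (h : ω'.Sublist ω) :
    cs.dzC (cs.wordProd ω') (cs.wordProd ω) := by
  induction ω using List.reverseRecOn generalizing ω' with
  | nil => rw [List.sublist_nil.mp h]; exact Relation.ReflTransGen.refl
  | append_singleton ω i ih =>
    have hr : cs.IsReduced ω := by simpa using hω.take ω.length
    have e1 := hr.eq
    have e2 := hω.eq
    rw [wordProd_append, wordProd_singleton] at e2 ⊢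
    have hlt : cs.dzC (cs.wordProd ω) (cs.wordProd ω * cs.simple i) :=
      cs.dzC_simple (by rw [e1, e2]; simp)
    obtain ⟨a, b, rfl, ha, hb⟩ := List.sublist_append_iff.mp h
    have hca := ih hr a ha
    rcases List.sublist_singleton.mp hb with rfl | rfl
    · rw [List.append_nil]; exact hca.trans hlt
    · rw [wordProd_append, wordProd_singleton]
      rcases cs.dzC_lift hca i with h | h
      · exact h.trans hlt
      · exact h

theorem dz_subword {u w : W} (h : cs.BruhatLE u w) (ω : List B) (hω : cs.wordProd ω = w) :
    ∃ ω' : List B, ω'.Sublist ω ∧ cs.wordProd ω' = u := by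
  obtain ⟨ρ, hr, rfl, ρ', hs, rfl⟩ := h
  exact cs.dzC_sublist (cs.dzC_of_sublist ρ hr ρ' hs) ω hω

theorem dz_antisymm {u w : W} (h : cs.BruhatLE u w) (h' : cs.BruhatLE w u) : u = w := by
  obtain ⟨ρ, hr, rfl, ρ', hs, rfl⟩ := h
  obtain ⟨σ, hr2, hσ, σ', hs2, hσ2⟩ := h'
  have a1 := hr.eq
  have a2 := hr2.eq
  have a3 := cs.length_wordProd_le ρ'
  have a4 := cs.length_wordProd_le σ'
  have a5 := hs.length_le
  have a6 := hs2.length_le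
  rw [hσ2] at a4
  rw [hσ] at a2
  rw [hs.eq_of_length (by omega)]

/-- Product sets of lower intervals are lower sets. -/
theorem dz_down {x y u u' a : W} (hu : cs.BruhatLE u x) (hu' : cs.BruhatLE u' y)
    (ha : cs.BruhatLE a (u * u')) :
    ∃ v v', cs.BruhatLE v x ∧ cs.BruhatLE v' y ∧ a = v * v' := by
  obtain ⟨ρ, hr, rfl, ρ', hs, rfl⟩ := hu
  obtain ⟨σ, hr2, rfl, σ', hs2, rfl⟩ := hu'
  obtain ⟨τ, ht, rfl⟩ := cs.dz_subword ha (ρ' ++ σ') (by rw [wordProd_append])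
  obtain ⟨α, β, rfl, h1, h2⟩ := List.sublist_append_iff.mp ht
  exact ⟨_, _, ⟨ρ, hr, rfl, α, h1.trans hs, rfl⟩, ⟨σ, hr2, rfl, β, h2.trans hs2, rfl⟩,
    by rw [wordProd_append]⟩

end aux

end CoxeterSystem

/-- The Demazure product is associative: `(x*y)*z = x*(y*z)`. -/
theorem stmt3 {B W : Type*} [Group W] {M : CoxeterMatrix B} (cs : CoxeterSystem M W)
    (x y z xy xy_z yz x_yz : W)
    (h1 : cs.IsDemazureProd x y xy) (h2 : cs.IsDemazureProd xy z xy_z)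
    (h3 : cs.IsDemazureProd y z yz) (h4 : cs.IsDemazureProd x yz x_yz) :
    xy_z = x_yz := by
  obtain ⟨⟨u1, v1, hu1, hv1, e1⟩, m1⟩ := h1
  obtain ⟨⟨u2, v2, hu2, hv2, e2⟩, m2⟩ := h2
  obtain ⟨⟨u3, v3, hu3, hv3, e3⟩, m3⟩ := h3
  obtain ⟨⟨u4, v4, hu4, hv4, e4⟩, m4⟩ := h4
  apply cs.dz_antisymm
  · rw [e1] at hu2
    obtain ⟨v, v', hv, hv', rfl⟩ := cs.dz_down hu1 hv1 hu2
    exact m4 _ ⟨v, v' * v2, hv, m3 _ ⟨v', v2, hv', hv2, rfl⟩, by rw [e2, mul_assoc]⟩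
  · rw [e3] at hv4
    obtain ⟨v, v', hv, hv', rfl⟩ := cs.dz_down hu3 hv3 hv4
    exact m2 _ ⟨u4 * v, v', m1 _ ⟨u4, v, hu4, hv, rfl⟩, hv', by rw [e4, mul_assoc]⟩
end

section
/- Let $H$ be the Iwahori-Hecke algebra of a Coxeter group over $\mathbb{Z}[v,v^{-1}]$ and $H_+$ the set of $A_+$-linear combinations of the standard basis $\{T_w\}$, where $A_+ = \mathbb{Z}_{\ge 0}[v-v^{-1}]$. Then for any $x, y \in W$: (1) $T_x T_y \in T_{xy} + H_+$; (2) $T_x T_y \in (v - v^{-1})^{\ell(x)+\ell(y)-\ell(x*y)} T_{x*y} + H_+$, where $x*y$ is the Demazure product. -/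
open LaurentPolynomial

open CoxeterSystem in
theorem exists_eta {B W : Type*} [Group W] {M : CoxeterMatrix B} (cs : CoxeterSystem M W) :
    ∃ η : W → W → ZMod 2, (∀ t, η 1 t = 0) ∧
      ∀ i w t, ∀ d : ZMod 2, (t = cs.simple i → d = 1) → (t ≠ cs.simple i → d = 0) →
        η (cs.simple i * w) t = η w (cs.simple i * t * cs.simple i) + d := by
  classical
  let f : B → Function.End (W × ZMod 2) := fun i p =>
    (cs.simple i * p.1 * cs.simple i, p.2 + if p.1 = cs.simple i then 1 else 0)
  have hf : M.IsLiftable f := by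
    intro i j
    set c := cs.simple i * cs.simple j with hc
    have hsc : ∀ a : ℕ, cs.simple j * c ^ a = (c⁻¹) ^ a * cs.simple j := by
      intro a
      induction a with
      | zero => simp
      | succ a ih =>
        rw [pow_succ, ← mul_assoc, ih, pow_succ, mul_assoc, mul_assoc]
        congr 1
        simp [hc, mul_assoc]
    have key : ∀ k : ℕ, ∀ t ε, ((f i * f j) ^ k) (t, ε) =
        (c ^ k * t * (c ^ k)⁻¹,
          ε + ∑ b ∈ Finset.range (2 * k), if t = (c⁻¹) ^ b * cs.simple j then 1 else 0) := by
      intro k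
      induction k with
      | zero => intro t ε; simp; rfl
      | succ k ih =>
        intro t ε
        rw [pow_succ']
        change f i (f j (((f i * f j) ^ k) (t, ε))) = _
        rw [ih]
        have e1 : (c ^ k * t * (c ^ k)⁻¹ = cs.simple j) ↔ t = (c⁻¹) ^ (2 * k) * cs.simple j := by
          rw [two_mul, pow_add, mul_assoc _ _ (cs.simple j), ← hsc, mul_inv_eq_iff_eq_mul, inv_pow,
            eq_inv_mul_iff_mul_eq]
        have e2 : (cs.simple j * (c ^ k * t * (c ^ k)⁻¹) * cs.simple j = cs.simple i) ↔
            t = (c⁻¹) ^ (2 * k + 1) * cs.simple j := by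
          have : (c⁻¹) ^ (2 * k + 1) * cs.simple j
              = (c ^ k)⁻¹ * ((cs.simple j * cs.simple i * cs.simple j) * c ^ k) := by
            rw [mul_assoc _ (cs.simple j) (c ^ k), hsc, two_mul, add_assoc, pow_add, pow_succ',
              inv_pow]
            simp [hc, mul_assoc]
          rw [this, eq_inv_mul_iff_mul_eq, ← mul_inv_eq_iff_eq_mul]
          constructor
          · intro h
            rw [← h]; simp [mul_assoc]
          · intro h
            rw [h]; simp [mul_assoc]
        simp only [f, e1, e2]
        refine Prod.ext ?_ ?_
        · simp [pow_succ', hc, mul_assoc]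
        · simp only
          rw [show 2 * (k + 1) = 2 * k + 1 + 1 by ring, Finset.sum_range_succ,
            Finset.sum_range_succ]
          ring
    funext p
    obtain ⟨t, ε⟩ := p
    rw [key]
    have hcM : c ^ M i j = 1 := cs.simple_mul_simple_pow i j
    rw [hcM, two_mul, Finset.sum_range_add]
    simp only [pow_add, inv_pow c (M i j), hcM, inv_one, one_mul, mul_one, CharTwo.add_self_eq_zero,
      add_zero]
    rfl
  let ψ := cs.lift ⟨f, hf⟩
  have hs : ∀ i, ψ (cs.simple i) = f i := fun i => cs.lift_apply_simple hf i
  have htr : ∀ w t ε, (ψ w (t, ε)) = (w * t * w⁻¹, (ψ w (t, 0)).2 + ε) := by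
    intro w
    refine cs.simple_induction_left (p := fun w => ∀ t ε, (ψ w (t, ε)) = (w * t * w⁻¹, (ψ w (t, 0)).2 + ε)) w ?_ ?_
    · intro t ε
      rw [map_one]
      change (t, ε) = (_, (0 : ZMod 2) + ε)
      simp
    · intro w i ih t ε
      rw [map_mul, hs]
      change f i (ψ w (t, ε)) = (_, (f i (ψ w (t, 0))).2 + ε)
      rw [ih t ε, ih t 0]
      simp only [f]
      refine Prod.ext ?_ ?_
      · simp [mul_assoc]
      · simp only; ring
  refine ⟨fun w t => (ψ w⁻¹ (t, 0)).2, ?_, ?_⟩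
  · intro t
    simp only [inv_one, map_one]
    rfl
  · intro i w t d h1 h0
    have hd : d = if t = cs.simple i then 1 else 0 := by
      split_ifs with h
      · exact h1 h
      · exact h0 h
    simp only [mul_inv_rev, cs.inv_simple, map_mul, hs]
    change (ψ w⁻¹ (f i (t, 0))).2 = _
    rw [htr]
    simp only [f, hd, zero_add]

theorem eta_mem {B W : Type*} [Group W] {M : CoxeterMatrix B} (cs : CoxeterSystem M W)
    (η : W → W → ZMod 2) (h1 : ∀ t, η 1 t = 0)
    (h2 : ∀ i w t, ∀ d : ZMod 2, (t = cs.simple i → d = 1) → (t ≠ cs.simple i → d = 0) →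
        η (cs.simple i * w) t = η w (cs.simple i * t * cs.simple i) + d)
    (ω : List B) : ∀ t, η (cs.wordProd ω) t ≠ 0 → t ∈ cs.leftInvSeq ω := by
  induction ω with
  | nil => intro t h; simp [h1] at h
  | cons i ω ih =>
    intro t h
    rw [CoxeterSystem.leftInvSeq]
    by_cases ht : t = cs.simple i
    · simp [ht]
    · rw [cs.wordProd_cons, h2 i _ t 0 (fun h => absurd h ht) (fun _ => rfl), add_zero] at h
      refine List.mem_cons_of_mem _ (List.mem_map.2 ⟨_, ih _ h, ?_⟩)
      simp [mul_assoc]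

open Classical in
noncomputable def lam {B W : Type*} [Group W] {M : CoxeterMatrix B} (cs : CoxeterSystem M W)
    (i : B) (w : W) : W :=
  if cs.length w < cs.length (cs.simple i * w) then cs.simple i * w else w

noncomputable def dem {B W : Type*} [Group W] {M : CoxeterMatrix B} (cs : CoxeterSystem M W)
    (ω : List B) (y : W) : W := ω.foldr (lam cs) y

theorem dem_length {B W : Type*} [Group W] {M : CoxeterMatrix B} (cs : CoxeterSystem M W)
    (ω ω' : List B) (hs : ω'.Sublist ω) :
    cs.length (cs.wordProd ω') ≤ cs.length (dem cs ω 1) := by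
  obtain ⟨η, h1, h2⟩ := exists_eta cs
  have hlt : ∀ w t, η w t ≠ 0 → cs.length (t * w) < cs.length w := by
    intro w t h
    obtain ⟨ω, hω, rfl⟩ := cs.exists_isReduced w
    exact (cs.isLeftInversion_of_mem_leftInvSeq hω (eta_mem cs η h1 h2 ω t h)).2
  let E : W → W → Prop := fun a b => ∃ t, η b t ≠ 0 ∧ a = t * b
  let C := Relation.ReflTransGen E
  have hC : ∀ a b, C a b → cs.length a ≤ cs.length b := by
    intro a b h
    induction h with
    | refl => exact le_rfl
    | tail _ h ih =>
      obtain ⟨t, ht, rfl⟩ := h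
      exact ih.trans (hlt _ _ ht).le
  have hdes : ∀ i b, cs.length (cs.simple i * b) < cs.length b → E (cs.simple i * b) b := by
    intro i b h
    refine ⟨cs.simple i, ?_, rfl⟩
    intro h0
    have := h2 i b (cs.simple i) 1 (fun _ => rfl) (fun h => absurd rfl h)
    have h3 := hlt (cs.simple i * b) (cs.simple i) (by
      rw [this]; simp [h0])
    simp at h3
    omega
  have hl1 : ∀ i b, C b (lam cs i b) := by
    intro i b
    unfold lam
    split_ifs with h
    · have := hdes i (cs.simple i * b) (by simpa using h)
      simp at this
      exact .single this
    · exact .refl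
  have hl2 : ∀ i b, C (cs.simple i * b) (lam cs i b) := by
    intro i b
    unfold lam
    split_ifs with h
    · exact .refl
    · exact .single (hdes i b (lt_of_le_of_ne (not_lt.1 h) (cs.length_simple_mul_ne b i)))
  have hmono : ∀ i a b, C a b → C (cs.simple i * a) (lam cs i b) := by
    intro i a b h
    induction h with
    | refl => exact hl2 i a
    | @tail c b hac hcb ih =>
      have hsc : C (cs.simple i * c) (lam cs i b) := by
        obtain ⟨t, ht, rfl⟩ := hcb
        by_cases hti : t = cs.simple i
        · subst hti
          simpa using hl1 i b
        · refine Relation.ReflTransGen.trans (.single ?_) (hl2 i b)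
          refine ⟨cs.simple i * t * cs.simple i, ?_, by simp [mul_assoc]⟩
          rw [h2 i b _ 0 (fun h => absurd (by
            have h' := congrArg (fun z => cs.simple i * z * cs.simple i) h
            simpa [mul_assoc] using h') hti) (fun _ => rfl)]
          simpa [mul_assoc] using ht
      refine ih.trans ?_
      rw [lam]
      by_cases h : cs.length c < cs.length (cs.simple i * c)
      · rw [if_pos h]; exact hsc
      · rw [if_neg h]; exact Relation.ReflTransGen.trans (.single hcb) (hl1 i b)
  apply hC
  induction hs with
  | slnil => simp [dem]; exact .refl
  | cons i _ ih => exact ih.trans (hl1 i _)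
  | cons_cons i _ ih => rw [cs.wordProd_cons]; exact hmono i _ _ ih

theorem dem_reduced {B W : Type*} [Group W] {M : CoxeterMatrix B} (cs : CoxeterSystem M W)
    (ω : List B) (h : cs.IsReduced ω) : dem cs ω 1 = cs.wordProd ω := by
  induction ω with
  | nil => simp [dem]
  | cons i ω ih =>
    have h' : cs.IsReduced ω := h.drop 1
    have e := ih h'
    change lam cs i (dem cs ω 1) = _
    rw [e, lam, ← cs.wordProd_cons, if_pos]
    rw [h.eq, h'.eq]; simp

theorem dem_sub {B W : Type*} [Group W] {M : CoxeterMatrix B} (cs : CoxeterSystem M W)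
    (ω : List B) (y : W) : ∃ ω' : List B, ω'.Sublist ω ∧ dem cs ω y = cs.wordProd ω' * y := by
  induction ω with
  | nil => exact ⟨[], by simp, by simp [dem]⟩
  | cons i ω ih =>
    obtain ⟨ω', hs, e⟩ := ih
    have : dem cs (i :: ω) y = lam cs i (dem cs ω y) := rfl
    rw [this, lam]
    split_ifs
    · exact ⟨i :: ω', hs.cons_cons i, by rw [e, cs.wordProd_cons, mul_assoc]⟩
    · exact ⟨ω', hs.cons i, e⟩

theorem hecke_aux {B W : Type*} [Group W] {M : CoxeterMatrix B} (cs : CoxeterSystem M W)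
    {H : Type*} [Ring H] (Q : H) (hQ : ∀ h, Q * h = h * Q)
    (TT : W → H) (hone : TT 1 = 1)
    (hmul : ∀ x y : W, cs.length (x * y) = cs.length x + cs.length y →
      TT x * TT y = TT (x * y))
    (hquad : ∀ i : B, TT (cs.simple i) * TT (cs.simple i) = Q * TT (cs.simple i) + 1)
    (P : AddSubmonoid H) (hP : P = AddSubmonoid.closure {h : H | ∃ (n : ℕ) (w : W),
        h = Q ^ n * TT w}) (ω : List B) : cs.IsReduced ω → ∀ y,
    (∃ h ∈ P, TT (cs.wordProd ω) * TT y = TT (cs.wordProd ω * y) + h) ∧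
    ∃ n, n + cs.length (dem cs ω y) = ω.length + cs.length y ∧
      ∃ h ∈ P, TT (cs.wordProd ω) * TT y = Q ^ n * TT (dem cs ω y) + h := by
  have hmem : ∀ n w, Q ^ n * TT w ∈ P := by
    intro n w; rw [hP]; exact AddSubmonoid.subset_closure ⟨n, w, rfl⟩
  have hQP : ∀ h ∈ P, Q * h ∈ P := by
    intro h hh
    rw [hP] at hh
    induction hh using AddSubmonoid.closure_induction with
    | mem x hx =>
      obtain ⟨n, w, rfl⟩ := hx
      rw [← mul_assoc, ← pow_succ']; exact hmem _ _
    | zero => simp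
    | add a b _ _ ha hb => rw [mul_add]; exact add_mem ha hb
  induction ω using List.reverseRecOn with
  | nil =>
    intro _ y
    exact ⟨⟨0, zero_mem _, by simp [hone]⟩, 0, by simp [dem], 0, zero_mem _, by simp [hone, dem]⟩
  | append_singleton ω i ih =>
    intro hr y
    have hr' : cs.IsReduced ω := by simpa using hr.take ω.length
    have hx : TT (cs.wordProd (ω ++ [i])) = TT (cs.wordProd ω) * TT (cs.simple i) := by
      rw [hmul, cs.wordProd_append, cs.wordProd_singleton]
      rw [hr'.eq, cs.length_simple, ← cs.wordProd_singleton i, ← cs.wordProd_append, hr.eq]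
      simp
    have hd : dem cs (ω ++ [i]) y = dem cs ω (lam cs i y) := by simp [dem]
    rw [hx, hd, cs.wordProd_append, cs.wordProd_singleton, List.length_append, List.length_singleton]
    rcases cs.length_simple_mul y i with hl | hl
    · have hlam : lam cs i y = cs.simple i * y := by rw [lam, if_pos]; omega
      rw [hlam]
      have e : TT (cs.simple i) * TT y = TT (cs.simple i * y) := by
        apply hmul; rw [hl, cs.length_simple]; omega
      obtain ⟨h1, n, hn, h3⟩ := ih hr' (cs.simple i * y)
      rw [mul_assoc, e, mul_assoc]
      exact ⟨h1, n, by omega, h3⟩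
    · have hlam : lam cs i y = y := by rw [lam, if_neg]; omega
      rw [hlam]
      have e0 : TT (cs.simple i) * TT (cs.simple i * y) = TT y := by
        rw [hmul, cs.simple_mul_simple_cancel_left]
        rw [cs.simple_mul_simple_cancel_left, cs.length_simple]; omega
      have e : TT (cs.simple i) * TT y = Q * TT y + TT (cs.simple i * y) := by
        rw [← e0, ← mul_assoc, hquad, add_mul, one_mul, mul_assoc]
      obtain ⟨⟨a, ha, h1⟩, -⟩ := ih hr' (cs.simple i * y)
      obtain ⟨⟨b', hb', h1'⟩, n, hn, b, hb, h2⟩ := ih hr' y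
      have e2 : TT (cs.wordProd ω) * TT (cs.simple i) * TT y =
          Q * (TT (cs.wordProd ω) * TT y) + TT (cs.wordProd ω) * TT (cs.simple i * y) := by
        rw [mul_assoc, e, mul_add, ← mul_assoc, ← hQ, mul_assoc]
      rw [e2]
      have m1 := hmem 0 (cs.wordProd ω * y)
      have m2 := hmem 0 (cs.wordProd ω * (cs.simple i * y))
      rw [pow_zero, one_mul] at m1 m2
      refine ⟨⟨Q * (TT (cs.wordProd ω) * TT y) + a, add_mem (hQP _ ?_) ha, ?_⟩,
        n + 1, by omega, Q * b + TT (cs.wordProd ω) * TT (cs.simple i * y),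
        add_mem (hQP _ hb) ?_, ?_⟩
      · rw [h1']; exact add_mem m1 hb'
      · rw [h1, mul_assoc]; abel
      · rw [h1]; exact add_mem m2 ha
      · rw [h2, mul_add, pow_succ', mul_assoc]; abel

/-- In the Hecke algebra with `H₊` the `ℤ≥0[v-v⁻¹]`-span of the standard
basis: (1) `T_x T_y ∈ T_{xy} + H₊`; (2) `T_x T_y ∈ (v-v⁻¹)^{ℓ(x)+ℓ(y)-ℓ(x*y)} T_{x*y} + H₊`
where `x*y` is the Demazure product. -/
theorem stmt6 {B W : Type*} [Group W] {M : CoxeterMatrix B} (cs : CoxeterSystem M W)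
    (H : Type*) [Ring H] [Algebra (LaurentPolynomial ℤ) H]
    (TT : W → H) (hone : TT 1 = 1)
    (hmul : ∀ x y : W, cs.length (x * y) = cs.length x + cs.length y →
      TT x * TT y = TT (x * y))
    (hquad : ∀ i : B, TT (cs.simple i) * TT (cs.simple i) =
      algebraMap (LaurentPolynomial ℤ) H (T 1 - T (-1)) * TT (cs.simple i) + 1)
    (Hplus : AddSubmonoid H)
    (hHplus : Hplus = AddSubmonoid.closure
      {h : H | ∃ (n : ℕ) (w : W),
        h = algebraMap (LaurentPolynomial ℤ) H ((T 1 - T (-1)) ^ n) * TT w})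
    (x y m : W) (hm : cs.IsDemazureProd x y m) :
    (∃ h ∈ Hplus, TT x * TT y = TT (x * y) + h) ∧
    (∃ h ∈ Hplus, TT x * TT y =
      algebraMap (LaurentPolynomial ℤ) H
        ((T 1 - T (-1)) ^ (cs.length x + cs.length y - cs.length m)) * TT m + h) := by
  obtain ⟨⟨u, u', ⟨ω, hω, rfl, ω', hs, rfl⟩, ⟨ρ, hρ, rfl, ρ', hs', rfl⟩, hmu⟩, hmax⟩ := hm
  obtain ⟨h1, n, hn, h2⟩ := hecke_aux cs (algebraMap (LaurentPolynomial ℤ) H (T 1 - T (-1)))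
    (fun h => Algebra.commutes _ h) TT hone hmul hquad Hplus
    (by simpa only [map_pow] using hHplus) ω hω (cs.wordProd ρ)
  have hle : cs.length m ≤ cs.length (dem cs ω (cs.wordProd ρ)) := by
    have := dem_length cs (ω ++ ρ) (ω' ++ ρ') (hs.append hs')
    rw [cs.wordProd_append, ← hmu] at this
    rwa [← dem_reduced cs ρ hρ, dem, dem, ← List.foldr_append]
  have hd : dem cs ω (cs.wordProd ρ) = m := by
    obtain ⟨α, hα, e⟩ := dem_sub cs ω (cs.wordProd ρ)
    obtain ⟨β, hβ, hβm, γ, hγ, hγe⟩ := hmax _ ⟨_, _, ⟨ω, hω, rfl, α, hα, rfl⟩,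
      ⟨ρ, hρ, rfl, ρ, List.Sublist.refl _, rfl⟩, e⟩
    have l1 := cs.length_wordProd_le γ
    rw [hγe] at l1
    have l2 := hβ.eq
    rw [hβm] at l2
    have := hγ.eq_of_length_le (by omega)
    rw [← hγe, this, hβm]
  refine ⟨h1, ?_⟩
  rw [hd] at hn h2
  have : cs.length (cs.wordProd ω) + cs.length (cs.wordProd ρ) - cs.length m = n := by
    rw [hω.eq]; omega
  rw [this, map_pow]
  exact h2
end
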